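/- Assume the corner case u0 ≥ l2 or u1 ≥ l3. Then there exists a bounding box b belonging to the box interval [l, u] (a collapsed box with zero width or zero height) such that IoU(b) = 0; consequently, since IoU(b') ≥ 0 for every bounding box b', the minimum of IoU over the bounding boxes in [l, u] equals 0. -/

import Mathlib

/-!
A box of zero width or zero height meets `gt` in area `0`, so its IoU is `0`. When `l2 ≤ u0` the
interval contains the zero-width box `(u0, l1, u0, l3)`, and when `l3 ≤ u1` the zero-height box
`(l0, u1, l2, u1)`. Nonnegativity of the IoU holds because the intersection area is at most the
area of the box (`interArea_le_area`), which makes the denominator nonnegative. Hence `0` is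
attained and is a lower bound.
-/

/-- Area of a box given by corner coordinates `(z0, z1)` (bottom-left) and
`(z2, z3)` (upper-right). -/
noncomputable def area (z0 z1 z2 z3 : ℝ) : ℝ := (z2 - z0) * (z3 - z1)

/-- Area of the intersection of the box `(z0, z1, z2, z3)` with the
ground-truth box `(g0, g1, g2, g3)`. -/
noncomputable def interArea (g0 g1 g2 g3 z0 z1 z2 z3 : ℝ) : ℝ :=
  max 0 (min z2 g2 - max z0 g0) * max 0 (min z3 g3 - max z1 g1)

/-- Intersection over union of the box `(z0, z1, z2, z3)` with the
ground-truth box `(g0, g1, g2, g3)`. -/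
noncomputable def iou (g0 g1 g2 g3 z0 z1 z2 z3 : ℝ) : ℝ :=
  interArea g0 g1 g2 g3 z0 z1 z2 z3 /
    (area z0 z1 z2 z3 + area g0 g1 g2 g3 - interArea g0 g1 g2 g3 z0 z1 z2 z3)

theorem interArea_nonneg (g0 g1 g2 g3 z0 z1 z2 z3 : ℝ) :
    0 ≤ interArea g0 g1 g2 g3 z0 z1 z2 z3 :=
  mul_nonneg (le_max_left _ _) (le_max_left _ _)

theorem overlap_le_length {g g' z z' : ℝ} (hz : z ≤ z') :
    max 0 (min z' g' - max z g) ≤ z' - z :=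
  max_le (sub_nonneg.2 hz) (sub_le_sub (min_le_left _ _) (le_max_left _ _))

theorem overlap_self (g g' z : ℝ) : max 0 (min z g' - max z g) = 0 :=
  max_eq_left (sub_nonpos.2 ((min_le_left _ _).trans (le_max_left _ _)))

theorem interArea_le_area {g0 g1 g2 g3 z0 z1 z2 z3 : ℝ} (h02 : z0 ≤ z2) (h13 : z1 ≤ z3) :
    interArea g0 g1 g2 g3 z0 z1 z2 z3 ≤ area z0 z1 z2 z3 :=
  mul_le_mul (overlap_le_length h02) (overlap_le_length h13) (le_max_left _ _)
    (sub_nonneg.2 h02)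

theorem iou_nonneg {g0 g1 g2 g3 z0 z1 z2 z3 : ℝ} (hg02 : g0 ≤ g2) (hg13 : g1 ≤ g3)
    (h02 : z0 ≤ z2) (h13 : z1 ≤ z3) : 0 ≤ iou g0 g1 g2 g3 z0 z1 z2 z3 := by
  have hg : 0 ≤ area g0 g1 g2 g3 := mul_nonneg (sub_nonneg.2 hg02) (sub_nonneg.2 hg13)
  have hI : interArea g0 g1 g2 g3 z0 z1 z2 z3 ≤ area z0 z1 z2 z3 := interArea_le_area h02 h13
  exact div_nonneg (interArea_nonneg ..) (by linarith)

theorem iou_eq_zero_of_collapsed (g0 g1 g2 g3 : ℝ) {z0 z1 z2 z3 : ℝ} (h : z0 = z2 ∨ z1 = z3) :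
    iou g0 g1 g2 g3 z0 z1 z2 z3 = 0 := by
  rcases h with rfl | rfl <;> simp only [iou, interArea, overlap_self, zero_mul, mul_zero, zero_div]

theorem stmt_13
    (g0 g1 g2 g3 : ℝ) (hg02 : g0 < g2) (hg13 : g1 < g3)
    (l0 l1 l2 l3 u0 u1 u2 u3 : ℝ)
    (hlu0 : l0 ≤ u0) (hlu1 : l1 ≤ u1) (hlu2 : l2 ≤ u2) (hlu3 : l3 ≤ u3)
    (hl02 : l0 ≤ l2) (hu02 : u0 ≤ u2) (hl13 : l1 ≤ l3) (hu13 : u1 ≤ u3)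
    (hcorner : l2 ≤ u0 ∨ l3 ≤ u1) :
    (∃ z0 z1 z2 z3 : ℝ, z0 ≤ z2 ∧ z1 ≤ z3 ∧
        l0 ≤ z0 ∧ z0 ≤ u0 ∧ l1 ≤ z1 ∧ z1 ≤ u1 ∧
        l2 ≤ z2 ∧ z2 ≤ u2 ∧ l3 ≤ z3 ∧ z3 ≤ u3 ∧
        (z0 = z2 ∨ z1 = z3) ∧
        iou g0 g1 g2 g3 z0 z1 z2 z3 = 0) ∧
    (∀ z0 z1 z2 z3 : ℝ, z0 ≤ z2 → z1 ≤ z3 → 0 ≤ iou g0 g1 g2 g3 z0 z1 z2 z3) ∧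
    IsLeast {x : ℝ | ∃ z0 z1 z2 z3 : ℝ, z0 ≤ z2 ∧ z1 ≤ z3 ∧
        l0 ≤ z0 ∧ z0 ≤ u0 ∧ l1 ≤ z1 ∧ z1 ≤ u1 ∧
        l2 ≤ z2 ∧ z2 ≤ u2 ∧ l3 ≤ z3 ∧ z3 ≤ u3 ∧
        x = iou g0 g1 g2 g3 z0 z1 z2 z3} 0 := by
  have hex : ∃ z0 z1 z2 z3 : ℝ, z0 ≤ z2 ∧ z1 ≤ z3 ∧
      l0 ≤ z0 ∧ z0 ≤ u0 ∧ l1 ≤ z1 ∧ z1 ≤ u1 ∧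
      l2 ≤ z2 ∧ z2 ≤ u2 ∧ l3 ≤ z3 ∧ z3 ≤ u3 ∧
      (z0 = z2 ∨ z1 = z3) ∧ iou g0 g1 g2 g3 z0 z1 z2 z3 = 0 := by
    rcases hcorner with h | h
    · exact ⟨u0, l1, u0, l3, le_rfl, hl13, hlu0, le_rfl, le_rfl, hlu1, h, hu02, le_rfl, hlu3,
        Or.inl rfl, iou_eq_zero_of_collapsed _ _ _ _ (Or.inl rfl)⟩
    · exact ⟨l0, u1, l2, u1, hl02, le_rfl, le_rfl, hlu0, hlu1, le_rfl, le_rfl, hlu2, h, hu13,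
        Or.inr rfl, iou_eq_zero_of_collapsed _ _ _ _ (Or.inr rfl)⟩
  refine ⟨hex, fun _ _ _ _ h02 h13 => iou_nonneg hg02.le hg13.le h02 h13, ?_, ?_⟩
  · obtain ⟨z0, z1, z2, z3, h02, h13, a0, b0, a1, b1, a2, b2, a3, b3, -, hz⟩ := hex
    exact ⟨z0, z1, z2, z3, h02, h13, a0, b0, a1, b1, a2, b2, a3, b3, hz.symm⟩
  · rintro x ⟨z0, z1, z2, z3, h02, h13, -, -, -, -, -, -, -, -, rfl⟩
    exact iou_nonneg hg02.le hg13.le h02 h13
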